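/- arXiv:1802.05501 — 3 statements merged into one kernel-verified Lean document; each statement's English description precedes it below -/
import Mathlib

section
/- Let k be a positive integer, let G be a finite simple graph, let P = (X_1,…,X_l) be a path decomposition of G in which every bag X_i has size at most k, and let S be a subset of V(G). Then at most 2k of the S-branches are not in-branches with respect to P. -/
/-!
Suppose a branch `C` is not an in-branch because its first bag misses some `v ∈ S`. Since `C` shares
a bag with every vertex of `S`, all the bags containing `v` come after the first bag of `C`. Hence
the first bag of `C` comes before the index `p` at which the last vertex of `S` to appear does so;
as `C` also shares a bag with that vertex and the bags meeting `C` form an interval, `C` meets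
`X p`. The index `p` does not depend on `C`, and as branches are disjoint, at most `k` of them meet
`X p`. The branches whose last bag misses a vertex of `S` are handled by reversing the order.
-/

open SimpleGraph

variable {V : Type*}

/-- `N_G(Y)`: the set of vertices outside `Y` having a neighbor in `Y`. -/
def nbhdSet (G : SimpleGraph V) (Y : Set V) : Set V :=
  {v | v ∉ Y ∧ ∃ u ∈ Y, G.Adj u v}

/-- `C` is a connected component of the subgraph of `G` induced by `U`. -/
def IsCompIn (G : SimpleGraph V) (U C : Set V) : Prop :=
  C.Nonempty ∧ C ⊆ U ∧ (G.induce C).Connected ∧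
    ∀ u ∈ C, ∀ v ∈ U, G.Adj u v → v ∈ C

/-- `C` is a connected component of `G - S`. -/
def IsCompOf (G : SimpleGraph V) (S C : Set V) : Prop :=
  IsCompIn G Sᶜ C

/-- `C` is an `S`-branch: a connected component of `G - S` with `N_G(C) = S`. -/
def IsBranch (G : SimpleGraph V) (S C : Set V) : Prop :=
  IsCompOf G S C ∧ nbhdSet G C = S

/-- `S` is a bottleneck (for the width parameter `k`): a nonempty set with
at least `2k+1` `S`-branches. -/
def IsBottleneck (G : SimpleGraph V) (k : ℕ) (S : Set V) : Prop :=
  S.Nonempty ∧ 2 * k + 1 ≤ {C : Set V | IsBranch G S C}.ncard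

/-- `(X 0, …, X (l-1))` is a path decomposition of `G`. -/
def IsPathDecomp (G : SimpleGraph V) (l : ℕ) (X : ℕ → Set V) : Prop :=
  (∀ v, ∃ i < l, v ∈ X i) ∧
  (∀ u v, G.Adj u v → ∃ i < l, u ∈ X i ∧ v ∈ X i) ∧
  (∀ i j m, i ≤ j → j ≤ m → m < l → X i ∩ X m ⊆ X j)

/-- The width of a path decomposition: the maximum bag size minus one. -/
noncomputable def pdWidth (l : ℕ) (X : ℕ → Set V) : ℕ :=
  ((Finset.range l).sup fun i => (X i).ncard) - 1

/-- The set of indices of bags meeting the vertex set `C`. -/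
def supp (l : ℕ) (X : ℕ → Set V) (C : Set V) : Set ℕ :=
  {t | t < l ∧ (C ∩ X t).Nonempty}

/-- `a(C)`: the first index of a bag meeting `C`. -/
noncomputable def firstIdx (l : ℕ) (X : ℕ → Set V) (C : Set V) : ℕ :=
  sInf (supp l X C)

/-- `b(C)`: the last index of a bag meeting `C`. -/
noncomputable def lastIdx (l : ℕ) (X : ℕ → Set V) (C : Set V) : ℕ :=
  sSup (supp l X C)

/-- `C` is an in-branch of `S` with respect to the decomposition:
an `S`-branch with `S ⊆ X (a C)` and `S ⊆ X (b C)`. -/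
def IsInBranch (G : SimpleGraph V) (l : ℕ) (X : ℕ → Set V) (S C : Set V) : Prop :=
  IsBranch G S C ∧ S ⊆ X (firstIdx l X C) ∧ S ⊆ X (lastIdx l X C)

/-- `α(S)`: the minimum of `a(H)` over in-branches `H` of `S`. -/
noncomputable def botStart (G : SimpleGraph V) (l : ℕ) (X : ℕ → Set V) (S : Set V) : ℕ :=
  sInf {i | ∃ C, IsInBranch G l X S C ∧ i = firstIdx l X C}

/-- `β(S)`: the maximum of `b(H)` over in-branches `H` of `S`. -/
noncomputable def botEnd (G : SimpleGraph V) (l : ℕ) (X : ℕ → Set V) (S : Set V) : ℕ :=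
  sSup {i | ∃ C, IsInBranch G l X S C ∧ i = lastIdx l X C}

/-- The interval `I(S,P) = [α(S), β(S)]` of a bottleneck `S`. -/
noncomputable def botInterval (G : SimpleGraph V) (l : ℕ) (X : ℕ → Set V) (S : Set V) : Set ℕ :=
  Set.Icc (botStart G l X S) (botEnd G l X S)

/-- A pre-branch of `S`. -/
def IsPreBranch (G : SimpleGraph V) (l : ℕ) (X : ℕ → Set V) (S C : Set V) : Prop :=
  IsBranch G S C ∧ ¬ IsInBranch G l X S C ∧ firstIdx l X C < botStart G l X S

/-- A post-branch of `S`. -/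
def IsPostBranch (G : SimpleGraph V) (l : ℕ) (X : ℕ → Set V) (S C : Set V) : Prop :=
  IsBranch G S C ∧ ¬ IsInBranch G l X S C ∧
    botStart G l X S ≤ firstIdx l X C ∧ botEnd G l X S < lastIdx l X C

/-- `C` waits in the interval `[i, j]` of the decomposition. -/
def WaitsIn (X : ℕ → Set V) (C : Set V) (i j : ℕ) : Prop :=
  ∀ t, i ≤ t → t ≤ j → C ∩ X t = C ∩ X i

/-- The decomposition is `S`-structured: every component of `G - S` that is not an
`S`-branch, and every pre- or post-branch of `S`, waits in `I(S,P)`. -/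
def IsStructured (G : SimpleGraph V) (l : ℕ) (X : ℕ → Set V) (S : Set V) : Prop :=
  ∀ C : Set V,
    ((IsCompOf G S C ∧ ¬ IsBranch G S C) ∨ IsPreBranch G l X S C ∨ IsPostBranch G l X S C) →
    WaitsIn X C (botStart G l X S) (botEnd G l X S)

/-- The decomposition is `I`-connected: every connected component of the subgraph
induced by any prefix of bags contains a vertex of `I`. -/
def IsIConn (G : SimpleGraph V) (l : ℕ) (X : ℕ → Set V) (I : Set V) : Prop :=
  ∀ i < l, ∀ C : Set V, IsCompIn G {v | ∃ j ≤ i, v ∈ X j} C → (C ∩ I).Nonempty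

section Intervals

variable {ι α : Type*} [LinearOrder α] [Nonempty ι] {I : ι → Set α}

theorem exists_forall_isLeast_mem_of_ordConnected (hI : ∀ i, (I i).OrdConnected)
    (hne : ∀ i, (I i).Nonempty) (hfin : (⋃ i, I i).Finite) :
    ∃ p ∈ ⋃ i, I i, ∀ (J : Set α) (a : α), J.OrdConnected → (∀ i, (J ∩ I i).Nonempty) →
      IsLeast J a → a ∉ ⋂ i, I i → p ∈ J := by
  have exists_min (i : ι) : ∃ x, IsLeast (I i) x :=
    Set.exists_min_image (I i) id (hfin.subset (Set.subset_iUnion I i)) (hne i)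
  choose f hf using exists_min
  have range_finite : (Set.range f).Finite :=
    hfin.subset (Set.range_subset_iff.2 fun i => Set.mem_iUnion_of_mem i (hf i).1)
  obtain ⟨_, ⟨s, rfl⟩, hs⟩ := Set.exists_max_image _ id range_finite (Set.range_nonempty f)
  refine ⟨f s, Set.mem_iUnion_of_mem s (hf s).1, fun J a hJ hJI ha haI => ?_⟩
  obtain ⟨i, hai⟩ : ∃ i, a ∉ I i := by simpa using haI
  obtain ⟨t, htJ, hti⟩ := hJI i
  have lt_min : a < f i := by
    by_contra! h
    exact hai ((hI i).out (hf i).1 hti ⟨h, ha.2 htJ⟩)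
  obtain ⟨r, hrJ, hrs⟩ := hJI s
  exact hJ.out ha.1 hrJ ⟨lt_min.le.trans (hs _ ⟨i, rfl⟩), (hf s).2 hrs⟩

theorem exists_forall_isGreatest_mem_of_ordConnected (hI : ∀ i, (I i).OrdConnected)
    (hne : ∀ i, (I i).Nonempty) (hfin : (⋃ i, I i).Finite) :
    ∃ p ∈ ⋃ i, I i, ∀ (J : Set α) (a : α), J.OrdConnected → (∀ i, (J ∩ I i).Nonempty) →
      IsGreatest J a → a ∉ ⋂ i, I i → p ∈ J := by
  obtain ⟨p, hp, h⟩ := exists_forall_isLeast_mem_of_ordConnected (α := αᵒᵈ) (I := I)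
    (fun i => (hI i).dual) hne hfin
  exact ⟨p, hp, fun J a hJ => h J a hJ.dual⟩

end Intervals

section Components

variable {G : SimpleGraph V} {U C D A : Set V}

lemma subset_of_induce_preconnected (hC : (G.induce C).Preconnected) (hCA : (C ∩ A).Nonempty)
    (hA : ∀ x ∈ C ∩ A, ∀ y ∈ C, G.Adj x y → y ∈ A) : C ⊆ A := by
  obtain ⟨v, hvC, hvA⟩ := hCA
  intro w hwC
  obtain ⟨walk⟩ := hC ⟨v, hvC⟩ ⟨w, hwC⟩
  by_contra hwA
  obtain ⟨d, -, hd, hd'⟩ := walk.exists_boundary_dart (Subtype.val ⁻¹' A) hvA hwA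
  exact hd' (hA _ ⟨d.fst.2, hd⟩ _ d.snd.2 d.adj)

lemma IsCompIn.subset_of_preconnected (hD : IsCompIn G U D) (hC : (G.induce C).Preconnected)
    (hCU : C ⊆ U) (hCD : (C ∩ D).Nonempty) : C ⊆ D :=
  subset_of_induce_preconnected hC hCD fun x hx y hy hxy => hD.2.2.2 x hx.2 y (hCU hy) hxy

lemma IsCompIn.eq_of_inter_nonempty (hC : IsCompIn G U C) (hD : IsCompIn G U D)
    (hCD : (C ∩ D).Nonempty) : C = D :=
  (hD.subset_of_preconnected hC.2.2.1.preconnected hC.2.1 hCD).antisymm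
    (hC.subset_of_preconnected hD.2.2.1.preconnected hD.2.1 (Set.inter_comm C D ▸ hCD))

theorem mk_setOf_isCompIn_inter_nonempty_le (G : SimpleGraph V) (U B : Set V) :
    Cardinal.mk {C : Set V | IsCompIn G U C ∧ (C ∩ B).Nonempty} ≤ Cardinal.mk B := by
  choose f hfC hfB using
    fun C : {C : Set V | IsCompIn G U C ∧ (C ∩ B).Nonempty} => C.2.2
  refine Cardinal.mk_le_of_injective (f := fun C => (⟨f C, hfB C⟩ : B)) fun C D hCD => ?_
  have hfCD : f C = f D := congrArg Subtype.val hCD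
  exact Subtype.ext (C.2.1.eq_of_inter_nonempty D.2.1 ⟨f C, hfC C, hfCD ▸ hfC D⟩)

end Components

section Supp

variable {G : SimpleGraph V} {l : ℕ} {X : ℕ → Set V} {S C : Set V}

lemma supp_subset_Iio (l : ℕ) (X : ℕ → Set V) (C : Set V) : supp l X C ⊆ Set.Iio l :=
  fun _ ht => ht.1

lemma isLeast_firstIdx (hC : (supp l X C).Nonempty) : IsLeast (supp l X C) (firstIdx l X C) :=
  ⟨Nat.sInf_mem hC, fun _ ht => Nat.sInf_le ht⟩

lemma isGreatest_lastIdx (hC : (supp l X C).Nonempty) :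
    IsGreatest (supp l X C) (lastIdx l X C) := by
  have bdd : BddAbove (supp l X C) := bddAbove_Iio.mono (supp_subset_Iio l X C)
  exact ⟨Nat.sSup_mem hC bdd, fun _ ht => le_csSup bdd ht⟩

lemma mem_supp_singleton {v : V} {t : ℕ} : t ∈ supp l X {v} ↔ t < l ∧ v ∈ X t := by
  simp [supp]

lemma subset_of_mem_iInter_supp {t : ℕ} (ht : t ∈ ⋂ v : S, supp l X {v.1}) : S ⊆ X t :=
  fun v hv => (mem_supp_singleton.1 (Set.mem_iInter.1 ht ⟨v, hv⟩)).2

lemma IsPathDecomp.supp_singleton_nonempty (hP : IsPathDecomp G l X) (v : V) :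
    (supp l X {v}).Nonempty :=
  (hP.1 v).imp fun _ => mem_supp_singleton.2

theorem IsPathDecomp.ordConnected_supp (hP : IsPathDecomp G l X)
    (hC : (G.induce C).Preconnected) : (supp l X C).OrdConnected := by
  refine ⟨?_⟩
  rintro i ⟨-, u, huC, hui⟩ m ⟨hml, w, hwC, hwm⟩ j ⟨hij, hjm⟩
  refine ⟨hjm.trans_lt hml, ?_⟩
  by_contra hCj
  have notMem_bag : ∀ x ∈ C, x ∉ X j := fun x hxC hxj => hCj ⟨x, hxC, hxj⟩
  -- As `C` misses `X j`, no edge inside `C` leaves the set of vertices seen up to the index `j`.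
  have subset_prefix : C ⊆ {x | ∃ t ≤ j, x ∈ X t} := by
    refine subset_of_induce_preconnected hC ⟨u, huC, i, hij, hui⟩ ?_
    rintro x ⟨hxC, t, htj, hxt⟩ y - hxy
    obtain ⟨r, hrl, hxr, hyr⟩ := hP.2.1 x y hxy
    rcases le_total r j with hrj | hjr
    · exact ⟨r, hrj, hyr⟩
    · exact absurd (hP.2.2 t j r htj hjr hrl ⟨hxt, hxr⟩) (notMem_bag x hxC)
  obtain ⟨t, htj, hwt⟩ := subset_prefix hwC
  exact notMem_bag w hwC (hP.2.2 t j m htj hjm hml ⟨hwt, hwm⟩)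

lemma IsPathDecomp.ordConnected_supp_singleton (hP : IsPathDecomp G l X) (v : V) :
    (supp l X {v}).OrdConnected :=
  hP.ordConnected_supp .of_subsingleton

lemma finite_iUnion_supp {ι : Type*} (l : ℕ) (X : ℕ → Set V) (C : ι → Set V) :
    (⋃ i, supp l X (C i)).Finite :=
  (Set.finite_Iio l).subset (Set.iUnion_subset fun i => supp_subset_Iio l X (C i))

end Supp

section Branches

variable {G : SimpleGraph V} {l : ℕ} {X : ℕ → Set V} {S C : Set V}

lemma IsBranch.ordConnected_supp (hC : IsBranch G S C) (hP : IsPathDecomp G l X) :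
    (supp l X C).OrdConnected :=
  hP.ordConnected_supp hC.1.2.2.1.preconnected

lemma IsBranch.supp_inter_supp_singleton_nonempty (hC : IsBranch G S C)
    (hP : IsPathDecomp G l X) {v : V} (hv : v ∈ S) : (supp l X C ∩ supp l X {v}).Nonempty := by
  obtain ⟨-, u, huC, huv⟩ : v ∈ nbhdSet G C := hC.2.symm ▸ hv
  obtain ⟨t, htl, hut, hvt⟩ := hP.2.1 u v huv
  exact ⟨t, ⟨htl, u, huC, hut⟩, mem_supp_singleton.2 ⟨htl, hvt⟩⟩

lemma IsBranch.supp_nonempty (hC : IsBranch G S C) (hP : IsPathDecomp G l X) :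
    (supp l X C).Nonempty := by
  obtain ⟨v, hv⟩ := hC.1.1
  exact (hP.1 v).imp fun _ ht => ⟨ht.1, v, hv, ht.2⟩

theorem IsPathDecomp.exists_mem_supp_of_not_subset_firstIdx (hP : IsPathDecomp G l X)
    (hS : S.Nonempty) :
    ∃ p < l, ∀ C, IsBranch G S C → ¬ S ⊆ X (firstIdx l X C) → p ∈ supp l X C := by
  have := hS.to_subtype
  obtain ⟨p, hp, mem_of_isLeast⟩ := exists_forall_isLeast_mem_of_ordConnected
    (I := fun v : S => supp l X {v.1}) (fun v => hP.ordConnected_supp_singleton v)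
    (fun v => hP.supp_singleton_nonempty v) (finite_iUnion_supp l X _)
  obtain ⟨v, hv⟩ := Set.mem_iUnion.1 hp
  exact ⟨p, hv.1, fun C hC hSC => mem_of_isLeast _ _ (hC.ordConnected_supp hP)
    (fun v => hC.supp_inter_supp_singleton_nonempty hP v.2)
    (isLeast_firstIdx (hC.supp_nonempty hP)) (mt subset_of_mem_iInter_supp hSC)⟩

theorem IsPathDecomp.exists_mem_supp_of_not_subset_lastIdx (hP : IsPathDecomp G l X)
    (hS : S.Nonempty) :
    ∃ q < l, ∀ C, IsBranch G S C → ¬ S ⊆ X (lastIdx l X C) → q ∈ supp l X C := by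
  have := hS.to_subtype
  obtain ⟨q, hq, mem_of_isGreatest⟩ := exists_forall_isGreatest_mem_of_ordConnected
    (I := fun v : S => supp l X {v.1}) (fun v => hP.ordConnected_supp_singleton v)
    (fun v => hP.supp_singleton_nonempty v) (finite_iUnion_supp l X _)
  obtain ⟨v, hv⟩ := Set.mem_iUnion.1 hq
  exact ⟨q, hv.1, fun C hC hSC => mem_of_isGreatest _ _ (hC.ordConnected_supp hP)
    (fun v => hC.supp_inter_supp_singleton_nonempty hP v.2)
    (isGreatest_lastIdx (hC.supp_nonempty hP)) (mt subset_of_mem_iInter_supp hSC)⟩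

lemma mk_setOf_isBranch_mem_supp_le (G : SimpleGraph V) (l : ℕ) (X : ℕ → Set V) (S : Set V)
    (p : ℕ) : Cardinal.mk {C | IsBranch G S C ∧ p ∈ supp l X C} ≤ Cardinal.mk (X p) :=
  have subset_meeting : {C | IsBranch G S C ∧ p ∈ supp l X C} ⊆
      {C | IsCompIn G Sᶜ C ∧ (C ∩ X p).Nonempty} := fun _ hC => ⟨hC.1.1, hC.2.2⟩
  (Cardinal.mk_le_mk_of_subset subset_meeting).trans
    (mk_setOf_isCompIn_inter_nonempty_le G Sᶜ (X p))

end Branches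

theorem stmt1_general (k : Cardinal) (G : SimpleGraph V) (l : ℕ) (X : ℕ → Set V)
    (hP : IsPathDecomp G l X) (hw : ∀ i < l, Cardinal.mk (X i) ≤ k) (S : Set V) :
    Cardinal.mk {C : Set V | IsBranch G S C ∧ ¬ IsInBranch G l X S C} ≤ 2 * k := by
  rcases S.eq_empty_or_nonempty with rfl | hS
  · simp [IsInBranch]
  obtain ⟨p, hpl, hp⟩ := hP.exists_mem_supp_of_not_subset_firstIdx hS
  obtain ⟨q, hql, hq⟩ := hP.exists_mem_supp_of_not_subset_lastIdx hS
  have subset_union : {C : Set V | IsBranch G S C ∧ ¬ IsInBranch G l X S C} ⊆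
      {C | IsBranch G S C ∧ p ∈ supp l X C} ∪ {C | IsBranch G S C ∧ q ∈ supp l X C} := by
    rintro C ⟨hC, hCin⟩
    by_cases hfirst : S ⊆ X (firstIdx l X C)
    · exact Or.inr ⟨hC, hq C hC fun hlast => hCin ⟨hC, hfirst, hlast⟩⟩
    · exact Or.inl ⟨hC, hp C hC hfirst⟩
  calc Cardinal.mk {C : Set V | IsBranch G S C ∧ ¬ IsInBranch G l X S C}
      ≤ Cardinal.mk {C | IsBranch G S C ∧ p ∈ supp l X C} +
          Cardinal.mk {C | IsBranch G S C ∧ q ∈ supp l X C} :=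
        (Cardinal.mk_le_mk_of_subset subset_union).trans (Cardinal.mk_union_le _ _)
    _ ≤ k + k :=
        add_le_add ((mk_setOf_isBranch_mem_supp_le G l X S p).trans (hw p hpl))
          ((mk_setOf_isBranch_mem_supp_le G l X S q).trans (hw q hql))
    _ = 2 * k := (two_mul k).symm

/-- for a path decomposition with all bags of size at most `k`,
at most `2k` of the `S`-branches are not in-branches. -/
theorem stmt1 [Fintype V] (k : ℕ) (hk : 1 ≤ k) (G : SimpleGraph V) (l : ℕ)
    (X : ℕ → Set V) (hP : IsPathDecomp G l X) (hw : ∀ i < l, (X i).ncard ≤ k)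
    (S : Set V) :
    {C : Set V | IsBranch G S C ∧ ¬ IsInBranch G l X S C}.ncard ≤ 2 * k := by
  have h := stmt1_general k G l X hP
    (fun i hi => by simpa only [← Set.cast_ncard (X i).toFinite, Nat.cast_le] using hw i hi) S
  exact_mod_cast (Set.cast_ncard (Set.toFinite _)).trans_le h
end

section
/- Let k be a positive integer, let G be a finite simple graph, and let S and S' be bottlenecks of G with S' ⊊ S. Then there exists an S'-branch H such that (S ∖ S') ∪ ⋃_{H' an S-branch} V(H') ⊆ V(H), and every S'-branch different from H is a connected component of G−S that is not an S-branch. -/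
/-!
A component of `G - S'` absorbs every connected set avoiding `S'` that it meets or touches. Let `H`
be the component of `G - S'` containing some `s ∈ S \ S'`. Every `S`-branch touches `s`, so
it lies in `H`. A single `S`-branch `C ⊆ H` then determines where `S` lies: since
`S = N(C) ⊆ H ∪ N(H)` and `N(H) ⊆ S'`, we get `S \ S' ⊆ H` and `N(H) = S'`. Any other `S'`-branch
is disjoint from `H`, hence from `S`, so it is still a component of `G - S`; its neighborhood is
`S' ≠ S`.
-/

open SimpleGraph

variable {V : Type*}

section Components

variable {G : SimpleGraph V} {S S' U W A B C D H : Set V}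

lemma nbhdSet_subset_union_of_subset (h : A ⊆ B) : nbhdSet G A ⊆ B ∪ nbhdSet G B := by
  rintro v ⟨-, u, huA, huv⟩
  by_cases hvB : v ∈ B
  · exact Or.inl hvB
  · exact Or.inr ⟨hvB, u, h huA, huv⟩

namespace IsCompIn

lemma subset_of_preconnected_s5 (hC : IsCompIn G U C) (hA : (G.induce A).Preconnected) (hAU : A ⊆ U)
    (hAC : (A ∩ C).Nonempty) : A ⊆ C := by
  intro y hyA
  by_contra hyC
  obtain ⟨x, hxA, hxC⟩ := hAC
  obtain ⟨p⟩ := hA ⟨x, hxA⟩ ⟨y, hyA⟩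
  obtain ⟨d, -, hfst, hsnd⟩ := p.exists_boundary_dart (Subtype.val ⁻¹' C) hxC hyC
  exact hsnd (hC.2.2.2 d.fst hfst d.snd (hAU d.snd.2) d.adj)

lemma disjoint_of_ne (hC : IsCompIn G U C) (hD : IsCompIn G U D) (hne : C ≠ D) :
    Disjoint C D := by
  by_contra hCD
  have hmeet : (C ∩ D).Nonempty := Set.not_disjoint_iff_nonempty_inter.1 hCD
  exact hne <|
    (hD.subset_of_preconnected_s5 hC.2.2.1.preconnected hC.2.1 hmeet).antisymm
      (hC.subset_of_preconnected_s5 hD.2.2.1.preconnected hD.2.1 (Set.inter_comm C D ▸ hmeet))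

lemma of_subset (hC : IsCompIn G U C) (hCW : C ⊆ W) (hWU : W ⊆ U) : IsCompIn G W C :=
  ⟨hC.1, hCW, hC.2.2.1, fun u hu v hv => hC.2.2.2 u hu v (hWU hv)⟩

end IsCompIn

lemma exists_isCompIn_of_mem (G : SimpleGraph V) {x : V} (hx : x ∈ U) :
    ∃ C, IsCompIn G U C ∧ x ∈ C := by
  -- The component is the union of all connected subsets of `U` through `x`.
  let F : Set (Set V) := {A | x ∈ A ∧ A ⊆ U ∧ (G.induce A).Connected}
  have singleton_mem : {x} ∈ F :=
    ⟨rfl, Set.singleton_subset_iff.2 hx, ⟨Preconnected.of_subsingleton⟩⟩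
  have mem_sUnion : x ∈ ⋃₀ F := ⟨{x}, singleton_mem, rfl⟩
  have connected : (G.induce (⋃₀ F)).Connected :=
    induce_sUnion_connected_of_pairwise_not_disjoint ⟨_, singleton_mem⟩
      (fun hA hB => ⟨x, hA.1, hB.1⟩) (fun hA => hA.2.2)
  refine ⟨⋃₀ F, ⟨⟨x, mem_sUnion⟩, Set.sUnion_subset fun A hA => hA.2.1, connected, ?_⟩,
    mem_sUnion⟩
  rintro u ⟨A, ⟨hxA, hAU, hA⟩, huA⟩ v hvU huv
  have insert_connected : (G.induce (A ∪ {v})).Connected :=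
    connected_induce_union hA.preconnected Preconnected.of_subsingleton huA rfl huv
  exact ⟨A ∪ {v}, ⟨Or.inl hxA, Set.union_subset hAU (Set.singleton_subset_iff.2 hvU),
    insert_connected⟩, Or.inr rfl⟩

lemma IsCompOf.nbhdSet_subset (hC : IsCompOf G S C) : nbhdSet G C ⊆ S := by
  rintro v ⟨hvC, u, huC, huv⟩
  by_contra hvS
  exact hvC (hC.2.2.2 u huC v hvS huv)

namespace IsBranch

lemma subset_of_isCompOf (hC : IsBranch G S C) (hH : IsCompOf G S' H) (hss : S' ⊆ S)
    (hSH : (S ∩ H).Nonempty) : C ⊆ H := by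
  have hCS' : C ⊆ S'ᶜ := hC.1.2.1.trans (Set.compl_subset_compl.2 hss)
  obtain ⟨s, hsS, hsH⟩ := hSH
  obtain ⟨-, u, huC, hus⟩ : s ∈ nbhdSet G C := hC.2.symm ▸ hsS
  have huH : u ∈ H := hH.2.2.2 s hsH u (hCS' huC) hus.symm
  exact hH.subset_of_preconnected_s5 hC.1.2.2.1.preconnected hCS' ⟨u, huC, huH⟩

lemma subset_union_nbhdSet (hC : IsBranch G S C) (hCH : C ⊆ H) : S ⊆ H ∪ nbhdSet G H :=
  hC.2.symm.subset.trans (nbhdSet_subset_union_of_subset hCH)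

lemma diff_subset_of_isCompOf (hC : IsBranch G S C) (hH : IsCompOf G S' H) (hCH : C ⊆ H) :
    S \ S' ⊆ H :=
  fun _ hv => (hC.subset_union_nbhdSet hCH hv.1).resolve_right
    fun hvN => hv.2 (hH.nbhdSet_subset hvN)

lemma isBranch_of_isCompOf (hC : IsBranch G S C) (hH : IsCompOf G S' H) (hss : S' ⊆ S)
    (hCH : C ⊆ H) : IsBranch G S' H :=
  ⟨hH, hH.nbhdSet_subset.antisymm fun _ hv =>
    (hC.subset_union_nbhdSet hCH (hss hv)).resolve_left fun hvH => hH.2.1 hvH hv⟩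

end IsBranch

lemma IsCompOf.of_ne_of_diff_subset (hC : IsCompOf G S' C) (hH : IsCompOf G S' H) (hne : C ≠ H)
    (hss : S' ⊆ S) (hSH : S \ S' ⊆ H) : IsCompOf G S C := by
  have hCH : Disjoint C H := hC.disjoint_of_ne hH hne
  have hCS : C ⊆ Sᶜ := fun v hvC hvS =>
    hCH.notMem_of_mem_left hvC (hSH ⟨hvS, hC.2.1 hvC⟩)
  exact hC.of_subset hCS (Set.compl_subset_compl.2 hss)

lemma IsBottleneck.exists_isBranch {k : ℕ} (hS : IsBottleneck G k S) : ∃ C, IsBranch G S C :=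
  Set.nonempty_of_ncard_ne_zero (Nat.ne_zero_of_lt hS.2)

theorem stmt5_general (hS : ∃ C, IsBranch G S C) (hss : S' ⊂ S) :
    ∃ H : Set V, IsBranch G S' H ∧
      (S \ S') ∪ {v | ∃ C : Set V, IsBranch G S C ∧ v ∈ C} ⊆ H ∧
      ∀ H' : Set V, IsBranch G S' H' → H' ≠ H →
        IsCompOf G S H' ∧ ¬ IsBranch G S H' := by
  obtain ⟨s, hsS, hsS'⟩ := Set.exists_of_ssubset hss
  obtain ⟨H, hH, hsH⟩ : ∃ H, IsCompOf G S' H ∧ s ∈ H := exists_isCompIn_of_mem G hsS'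
  have branch_subset : ∀ C, IsBranch G S C → C ⊆ H := fun _ hC =>
    hC.subset_of_isCompOf hH hss.subset ⟨s, hsS, hsH⟩
  obtain ⟨C, hC⟩ := hS
  have diff_subset : S \ S' ⊆ H := hC.diff_subset_of_isCompOf hH (branch_subset C hC)
  refine ⟨H, hC.isBranch_of_isCompOf hH hss.subset (branch_subset C hC), ?_, ?_⟩
  · exact Set.union_subset diff_subset fun v ⟨C', hC', hv⟩ => branch_subset C' hC' hv
  · intro H' hH' hne
    exact ⟨hH'.1.of_ne_of_diff_subset hH hne hss.subset diff_subset,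
      fun hH'S => hss.ne (hH'.2.symm.trans hH'S.2)⟩

end Components

/-- for bottlenecks `S' ⊊ S` there is an `S'`-branch `H` containing
`S ∖ S'` and all `S`-branches, and every other `S'`-branch is a connected component
of `G - S` that is not an `S`-branch. -/
theorem stmt5 [Fintype V] (k : ℕ) (hk : 1 ≤ k) (G : SimpleGraph V) (S S' : Set V)
    (hS : IsBottleneck G k S) (hS' : IsBottleneck G k S') (hss : S' ⊂ S) :
    ∃ H : Set V, IsBranch G S' H ∧
      (S \ S') ∪ {v | ∃ C : Set V, IsBranch G S C ∧ v ∈ C} ⊆ H ∧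
      ∀ H' : Set V, IsBranch G S' H' → H' ≠ H →
        IsCompOf G S H' ∧ ¬ IsBranch G S H' :=
  stmt5_general hS.exists_isBranch hss
end

section
/- Let k be a positive integer, let G be a finite simple graph admitting a path decomposition in which every bag has size at most k, and let S and S' be bottlenecks of G with S' ⊄ S and S ⊄ S'. Let H be the unique connected component of G−S with S' ⊆ S ∪ V(H). Then there exists exactly one connected component C of G−S' such that (S ∖ S') ∪ ⋃_{H' an S-branch, H' ≠ H} V(H') ⊆ V(C); moreover, every S'-branch except possibly C is a subgraph of H. -/
/-!
A component of `G - T` that contains a vertex `s ∈ S` contains every `S`-branch avoiding `T`,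
because `s` has a neighbour in each such branch. This is applied twice.

First, since `S' ⊆ S ∪ H`, the `S`-branches other than `H` avoid `S'`, so they all lie in the
component `C` of `G - S'` through a fixed vertex of `S \ S'`. One such branch exists because `S` is
a bottleneck, and as every vertex of `S` has a neighbour in it, `C` also contains `S \ S'`.

Second, with the roles of `S` and `S'` exchanged: an `S'`-branch other than `C` is disjoint from
`C ⊇ S \ S'`, so it avoids `S`. Since `H` contains a vertex of `S' \ S`, it contains this branch.
-/

open SimpleGraph

variable {V : Type*}

section

variable {G : SimpleGraph V} {U S T B C D H : Set V} {v s : V}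

theorem subset_of_preconnected_induce (hC : (G.induce C).Preconnected) (hvC : v ∈ C) (hvD : v ∈ D)
    (hD : ∀ x ∈ D, ∀ y ∈ C, G.Adj x y → y ∈ D) : C ⊆ D := by
  intro w hwC
  by_contra hwD
  obtain ⟨p⟩ := hC ⟨v, hvC⟩ ⟨w, hwC⟩
  obtain ⟨⟨⟨x, y⟩, hxy⟩, -, hxD, hyD⟩ := p.exists_boundary_dart (Subtype.val ⁻¹' D) hvD hwD
  exact hyD (hD x hxD y y.2 hxy)

theorem isCompIn_image_supp (c : (G.induce U).ConnectedComponent) :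
    IsCompIn G U (Subtype.val '' c.supp) := by
  refine ⟨c.nonempty_supp.image _, Subtype.coe_image_subset U c.supp, ?_, ?_⟩
  · let f : c.toSimpleGraph →g G.induce (Subtype.val '' c.supp) :=
      induceHom (Embedding.induce U).toHom (Set.mapsTo_image _ _)
    have hf : Function.Surjective f := by
      rintro ⟨_, x, hx, rfl⟩
      exact ⟨⟨x, hx⟩, rfl⟩
    exact c.connected_toSimpleGraph.map f hf
  · rintro _ ⟨x, hx, rfl⟩ y hy hxy
    exact ⟨⟨y, hy⟩, c.mem_supp_of_adj_mem_supp hx hxy, rfl⟩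

theorem exists_isCompIn_mem (G : SimpleGraph V) (hv : v ∈ U) : ∃ C, IsCompIn G U C ∧ v ∈ C :=
  ⟨_, isCompIn_image_supp ((G.induce U).connectedComponentMk ⟨v, hv⟩), ⟨v, hv⟩, rfl, rfl⟩

namespace IsCompIn

theorem subset (hC : IsCompIn G U C) : C ⊆ U :=
  hC.2.1

theorem preconnected (hC : IsCompIn G U C) : (G.induce C).Preconnected :=
  hC.2.2.1.preconnected

theorem mem_of_adj {u : V} (hC : IsCompIn G U C) (hu : u ∈ C) (hv : v ∈ U) (huv : G.Adj u v) :
    v ∈ C :=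
  hC.2.2.2 u hu v hv huv

theorem subset_of_preconnected_s7 (hC : IsCompIn G U C) (hD : (G.induce D).Preconnected) (hDU : D ⊆ U)
    (hvD : v ∈ D) (hvC : v ∈ C) : D ⊆ C :=
  subset_of_preconnected_induce hD hvD hvC fun _ hx _ hy => hC.mem_of_adj hx (hDU hy)

theorem eq_of_mem (hC : IsCompIn G U C) (hD : IsCompIn G U D) (hvC : v ∈ C) (hvD : v ∈ D) :
    C = D :=
  (hD.subset_of_preconnected_s7 hC.preconnected hC.subset hvC hvD).antisymm
    (hC.subset_of_preconnected_s7 hD.preconnected hD.subset hvD hvC)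

end IsCompIn

theorem IsCompOf.subset_compl_of_ne (hB : IsCompOf G S B) (hH : IsCompOf G S H) (hne : B ≠ H)
    (hT : T ⊆ S ∪ H) : B ⊆ Tᶜ := fun _ hxB hxT =>
  (hT hxT).elim (hB.subset hxB) fun hxH => hne (hB.eq_of_mem hH hxB hxH)

namespace IsBranch

theorem exists_adj (hB : IsBranch G S B) (hs : s ∈ S) : ∃ u ∈ B, G.Adj u s :=
  (hB.2.symm ▸ hs : s ∈ nbhdSet G B).2

theorem subset_of_isCompOf_s7 (hB : IsBranch G S B) (hC : IsCompOf G T C) (hBT : B ⊆ Tᶜ)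
    (hsS : s ∈ S) (hsC : s ∈ C) : B ⊆ C := by
  obtain ⟨u, huB, hus⟩ := hB.exists_adj hsS
  exact hC.subset_of_preconnected_s7 hB.1.preconnected hBT huB
    (hC.mem_of_adj hsC (hBT huB) hus.symm)

theorem sdiff_subset_of_subset (hB : IsBranch G S B) (hC : IsCompOf G T C) (hBC : B ⊆ C) :
    S \ T ⊆ C := by
  rintro s ⟨hsS, hsT⟩
  obtain ⟨u, huB, hus⟩ := hB.exists_adj hsS
  exact hC.mem_of_adj (hBC huB) hsT hus

end IsBranch

theorem IsBottleneck.exists_isBranch_ne {k : ℕ} (hS : IsBottleneck G k S) (hk : 1 ≤ k)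
    (H : Set V) : ∃ B, IsBranch G S B ∧ B ≠ H :=
  Set.exists_ne_of_one_lt_ncard ((by omega : 1 < 2 * k + 1).trans_le hS.2) H

end

theorem stmt7_general (G : SimpleGraph V) (S S' H : Set V) (hns : ¬ S' ⊆ S) (hns' : ¬ S ⊆ S')
    (hH : IsCompOf G S H) (hS'H : S' ⊆ S ∪ H) (hbranch : ∃ B, IsBranch G S B ∧ B ≠ H) :
    ∃ C : Set V,
      (IsCompOf G S' C ∧
        (S \ S') ∪ {v | ∃ H' : Set V, IsBranch G S H' ∧ H' ≠ H ∧ v ∈ H'} ⊆ C) ∧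
      (∀ C' : Set V,
        IsCompOf G S' C' ∧
          (S \ S') ∪ {v | ∃ H' : Set V, IsBranch G S H' ∧ H' ≠ H ∧ v ∈ H'} ⊆ C' →
        C' = C) ∧
      ∀ B : Set V, IsBranch G S' B → B ≠ C → B ⊆ H := by
  obtain ⟨s, hsS, hsS'⟩ := Set.not_subset.1 hns'
  obtain ⟨t, htS', htS⟩ := Set.not_subset.1 hns
  have htH : t ∈ H := (hS'H htS').resolve_left htS
  obtain ⟨C, hC, hsC⟩ : ∃ C, IsCompOf G S' C ∧ s ∈ C := exists_isCompIn_mem G hsS'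
  have branch_subset : ∀ B, IsBranch G S B → B ≠ H → B ⊆ C := fun B hB hne =>
    hB.subset_of_isCompOf_s7 hC (hB.1.subset_compl_of_ne hH hne hS'H) hsS hsC
  have sdiff_subset : S \ S' ⊆ C := by
    obtain ⟨B, hB, hne⟩ := hbranch
    exact hB.sdiff_subset_of_subset hC (branch_subset B hB hne)
  refine ⟨C, ⟨hC, Set.union_subset sdiff_subset ?_⟩, ?_, ?_⟩
  · rintro v ⟨B, hB, hne, hvB⟩
    exact branch_subset B hB hne hvB
  · rintro C' ⟨hC', hsub⟩
    exact hC'.eq_of_mem hC (hsub (Or.inl ⟨hsS, hsS'⟩)) hsC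
  · intro B hB hne
    have hBS : B ⊆ Sᶜ :=
      hB.1.subset_compl_of_ne hC hne (Set.sdiff_subset_iff.1 sdiff_subset)
    exact hB.subset_of_isCompOf_s7 hH hBS htS' htH

/-- for incomparable bottlenecks `S, S'`, with `H` the unique component
of `G - S` with `S' ⊆ S ∪ H`, there is exactly one component `C` of `G - S'`
containing `S ∖ S'` and all `S`-branches other than `H`; moreover every `S'`-branch
except possibly `C` is contained in `H`. -/
theorem stmt7 [Fintype V] (k : ℕ) (hk : 1 ≤ k) (G : SimpleGraph V)
    (hdec : ∃ (l : ℕ) (X : ℕ → Set V),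
      IsPathDecomp G l X ∧ ∀ i < l, (X i).ncard ≤ k)
    (S S' : Set V) (hS : IsBottleneck G k S) (hS' : IsBottleneck G k S')
    (hns : ¬ S' ⊆ S) (hns' : ¬ S ⊆ S')
    (H : Set V) (hH : IsCompOf G S H ∧ S' ⊆ S ∪ H)
    (hHuniq : ∀ H'' : Set V, IsCompOf G S H'' ∧ S' ⊆ S ∪ H'' → H'' = H) :
    ∃ C : Set V,
      (IsCompOf G S' C ∧
        (S \ S') ∪ {v | ∃ H' : Set V, IsBranch G S H' ∧ H' ≠ H ∧ v ∈ H'} ⊆ C) ∧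
      (∀ C' : Set V,
        IsCompOf G S' C' ∧
          (S \ S') ∪ {v | ∃ H' : Set V, IsBranch G S H' ∧ H' ≠ H ∧ v ∈ H'} ⊆ C' →
        C' = C) ∧
      ∀ B : Set V, IsBranch G S' B → B ≠ C → B ⊆ H :=
  stmt7_general G S S' H hns hns' hH.1 hH.2 (hS.exists_isBranch_ne hk H)
end
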